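/- Let H be a heap, S a normal sub-heap of H, and e ∈ S. Let H/S denote the set of equivalence classes of the relation ∼_S, which is a heap under [ā, b̄, c̄] = overline{[a,b,c]}. Then the map sending the ∼_S-class of a ∈ H to the coset of a in G(H;e)/S is a group isomorphism from the retract G(H/S; S) (the class of e being S itself) onto the quotient group G(H;e)/S, where S is regarded as a normal subgroup of G(H;e). -/

import Mathlib

/-- A ternary operation is a heap operation if it is associative and
satisfies the Mal'cev identities. -/
def IsHeap {H : Type*} (op : H → H → H → H) : Prop :=
  (∀ a b c d e : H, op (op a b c) d e = op a b (op c d e)) ∧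
  (∀ a b : H, op a b b = a) ∧ (∀ a b : H, op b b a = a)

/-- Let `H` be a heap, `S` a normal sub-heap and `e ∈ S`.
Given the quotient heap `H/S` (the quotient of `H` by the sub-heap relation
`∼_S`, whose retract at the class `S` of `e` has product induced by
`(a,b) ↦ [a,e,b]`) and the quotient group `G(H;e)/S` (the quotient of `H`
by the coset relation of the subgroup `S` of `G(H;e)`, with the induced
product), the map sending the `∼_S`-class of `a` to the coset of `a` is a group
isomorphism from `G(H/S;S)` onto `G(H;e)/S`. -/
theorem quotient_heap_retract_iso_quotient_group {H : Type*}
    (op : H → H → H → H) (hH : IsHeap op) (S : Set H)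
    (hcl : ∀ a ∈ S, ∀ b ∈ S, ∀ c ∈ S, op a b c ∈ S) (e : H) (he : e ∈ S)
    (hnorm : ∀ a : H, ∀ s ∈ S, ∃ t ∈ S, op a e s = op t e a)
    -- the sub-heap relation `∼_S` and the quotient heap `H/S`
    (s₁ : Setoid H) (hs₁ : ∀ a b : H, s₁.r a b ↔ ∃ s ∈ S, op a b s ∈ S)
    -- the coset relation of the subgroup `S` of `G(H;e)`
    (s₂ : Setoid H) (hs₂ : ∀ a b : H, s₂.r a b ↔ ∃ s ∈ S, a = op s e b)
    -- the product of `G(H/S;S)`, induced by `[-,e,-]` on classes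
    (m₁ : Quotient s₁ → Quotient s₁ → Quotient s₁)
    (hm₁ : ∀ a b : H, m₁ (Quotient.mk s₁ a) (Quotient.mk s₁ b) =
      Quotient.mk s₁ (op a e b))
    -- the product of the quotient group `G(H;e)/S`, induced by `[-,e,-]` on cosets
    (m₂ : Quotient s₂ → Quotient s₂ → Quotient s₂)
    (hm₂ : ∀ a b : H, m₂ (Quotient.mk s₂ a) (Quotient.mk s₂ b) =
      Quotient.mk s₂ (op a e b)) :
    ∃ φ : Quotient s₁ → Quotient s₂,
      (∀ a : H, φ (Quotient.mk s₁ a) = Quotient.mk s₂ a) ∧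
      Function.Bijective φ ∧
      ∀ x y : Quotient s₁, φ (m₁ x y) = m₂ (φ x) (φ y) := by
  obtain ⟨hassoc, hr, hl⟩ := hH
  have key : ∀ a b : H, s₁.r a b ↔ s₂.r a b := by
    intro a b
    rw [hs₁, hs₂]
    constructor
    · rintro ⟨s, hs, ht⟩
      refine ⟨op (op a b s) s e, hcl _ ht _ hs _ he, ?_⟩
      rw [hassoc, hl, hassoc, hl, hr]
    · rintro ⟨s, hs, rfl⟩
      refine ⟨e, he, ?_⟩
      rw [hassoc, hl, hr]
      exact hs
  refine ⟨Quotient.lift (fun a => Quotient.mk s₂ a)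
    (fun a b h => Quotient.sound ((key a b).1 h)), fun a => rfl, ⟨?_, ?_⟩, ?_⟩
  · intro x y
    induction x using Quotient.inductionOn with | _ a
    induction y using Quotient.inductionOn with | _ b
    intro h
    exact Quotient.sound ((key a b).2 (Quotient.exact h))
  · intro y
    induction y using Quotient.inductionOn with | _ b
    exact ⟨Quotient.mk s₁ b, rfl⟩
  · intro x y
    induction x using Quotient.inductionOn with | _ a
    induction y using Quotient.inductionOn with | _ b
    rw [hm₁]
    exact (hm₂ a b).symm
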